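/- Let ℓ ≥ 3 be an odd integer and let P = z₁, Q = z₂^ℓ, R = z₂^{(ℓ−1)/2} z₃ (so d = deg P + deg Q = ℓ+1 = 2·deg R and the exponent determinant equals ℓ ≠ 0). Then: (1) for every a ∈ ℝ the field X₁ = i·a·z₂^ℓ ∂/∂z₁ is an infinitesimal CR automorphism of M; (2) for all a, b ∈ ℝ the field X₂ = −(a+ib)·z₂^{(ℓ−1)/2} z₃ ∂/∂z₁ + (a−ib)·z₂^{(ℓ+1)/2} ∂/∂z₃ is an infinitesimal CR automorphism of M; and (3) dim_ℝ g_c = 3. -/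

import Mathlib

open MvPolynomial Complex

noncomputable section

/-- `Φ(z) = P(z)·conj(Q(z)) + Q(z)·conj(P(z)) + R(z)·conj(R(z))`, so that the model
hypersurface is `M = {(z,w) : Im w = Φ(z)}`. -/
def Phi (P Q R : MvPolynomial (Fin 3) ℂ) (z : Fin 3 → ℂ) : ℂ :=
  eval z P * (starRingEnd ℂ) (eval z Q) + eval z Q * (starRingEnd ℂ) (eval z P) +
    eval z R * (starRingEnd ℂ) (eval z R)

/-- `Φ_j(z) = (∂P/∂z_j)(z)·conj(Q(z)) + (∂Q/∂z_j)(z)·conj(P(z)) + (∂R/∂z_j)(z)·conj(R(z))`. -/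
def PhiD (P Q R : MvPolynomial (Fin 3) ℂ) (j : Fin 3) (z : Fin 3 → ℂ) : ℂ :=
  eval z (pderiv j P) * (starRingEnd ℂ) (eval z Q) +
    eval z (pderiv j Q) * (starRingEnd ℂ) (eval z P) +
    eval z (pderiv j R) * (starRingEnd ℂ) (eval z R)

/-- The polynomial vector field `Σ F_j ∂/∂z_j + G ∂/∂w` is an infinitesimal CR
automorphism of `M = {Im w = Φ(z)}`. -/
def IsInfCR (P Q R : MvPolynomial (Fin 3) ℂ)
    (F : Fin 3 → MvPolynomial (Fin 4) ℂ) (G : MvPolynomial (Fin 4) ℂ) : Prop :=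
  ∀ (z : Fin 3 → ℂ) (u : ℝ),
    (eval (Fin.snoc z ((u : ℂ) + Complex.I * Phi P Q R z)) G / (2 * Complex.I) -
      ∑ j, eval (Fin.snoc z ((u : ℂ) + Complex.I * Phi P Q R z)) (F j) * PhiD P Q R j z).re = 0

/-- `g_c`: rigid infinitesimal CR automorphisms `Σ f_j(z) ∂/∂z_j` of `M` all of
whose monomials have total degree at least `2` and at most `d`. -/
def gcSet (P Q R : MvPolynomial (Fin 3) ℂ) (d : ℕ) : Set (Fin 3 → MvPolynomial (Fin 3) ℂ) :=
  {f | (∀ j, ∀ m ∈ (f j).support, 2 ≤ (m.sum fun _ e => e) ∧ (m.sum fun _ e => e) ≤ d) ∧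
       ∀ z : Fin 3 → ℂ, (∑ j, eval z (f j) * PhiD P Q R j z).re = 0}

/-- A sesqui-polynomial expression vanishing on the diagonal vanishes identically. -/
theorem polarization {σ ι : Type*} [Finite σ] [Fintype ι] (p q : ι → MvPolynomial σ ℂ)
    (h : ∀ z : σ → ℂ, ∑ i, eval z (p i) * (starRingEnd ℂ) (eval z (q i)) = 0) (z w : σ → ℂ) :
    ∑ i, eval z (p i) * (starRingEnd ℂ) (eval w (q i)) = 0 := by
  set s : σ → MvPolynomial (σ ⊕ σ) ℂ := fun j => X (Sum.inl j) + C Complex.I * X (Sum.inr j)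
  set t : σ → MvPolynomial (σ ⊕ σ) ℂ := fun j => X (Sum.inl j) - C Complex.I * X (Sum.inr j)
  set H : MvPolynomial (σ ⊕ σ) ℂ :=
    ∑ i, bind₁ s (p i) * bind₁ t (map (starRingEnd ℂ) (q i)) with hH
  have eval_conj : ∀ (v : σ → ℂ) (f : MvPolynomial σ ℂ),
      eval v (map (starRingEnd ℂ) f) =
        (starRingEnd ℂ) (eval (fun j => (starRingEnd ℂ) (v j)) f) := by
    intro v f
    rw [eval_map, eval, coe_eval₂Hom, eval₂_comp_left]
    congr 1
    funext j
    simp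
  have eval_H : ∀ v : σ ⊕ σ → ℂ, eval v H =
      ∑ i, eval (fun j => v (Sum.inl j) + Complex.I * v (Sum.inr j)) (p i) *
        (starRingEnd ℂ) (eval (fun j => (starRingEnd ℂ)
          (v (Sum.inl j) - Complex.I * v (Sum.inr j))) (q i)) := by
    intro v
    rw [hH, map_sum]
    refine Finset.sum_congr rfl fun i _ => ?_
    rw [map_mul, ← eval_conj]
    simp only [eval, eval₂Hom_bind₁]
    congr 2 <;> simp [s, t]
  have H_zero : H = 0 := by
    refine MvPolynomial.funext_set (fun _ => Set.range ((↑) : ℝ → ℂ))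
      (fun _ => Set.infinite_range_of_injective Complex.ofReal_injective) fun v hv => ?_
    rw [map_zero, eval_H, ← h fun j => v (Sum.inl j) + Complex.I * v (Sum.inr j)]
    have hr : ∀ k, (starRingEnd ℂ) (v k) = v k := fun k => by
      obtain ⟨r, hr⟩ := hv k (Set.mem_univ k)
      rw [← hr, Complex.conj_ofReal]
    simp [hr]
  have key := eval_H (Sum.elim (fun j => (z j + (starRingEnd ℂ) (w j)) / 2)
    (fun j => (z j - (starRingEnd ℂ) (w j)) / (2 * Complex.I)))
  rw [H_zero, map_zero] at key
  rw [key]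
  have hz : (fun j => (z j + (starRingEnd ℂ) (w j)) / 2 +
      Complex.I * ((z j - (starRingEnd ℂ) (w j)) / (2 * Complex.I))) = z := by
    funext j
    field_simp
    ring
  have hw : (fun j => (starRingEnd ℂ) ((z j + (starRingEnd ℂ) (w j)) / 2 -
      Complex.I * ((z j - (starRingEnd ℂ) (w j)) / (2 * Complex.I)))) = w := by
    funext j
    have : (z j + (starRingEnd ℂ) (w j)) / 2 -
      Complex.I * ((z j - (starRingEnd ℂ) (w j)) / (2 * Complex.I)) = (starRingEnd ℂ) (w j) := by
      field_simp
      ring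
    rw [this, Complex.conj_conj]
  simp only [Sum.elim_inl, Sum.elim_inr, hz, hw]

theorem MvPolynomial.IsHomogeneous.sum_eq_of_mem_support {σ R : Type*} [CommSemiring R]
    {p : MvPolynomial σ R} {n : ℕ} (hp : p.IsHomogeneous n) {e : σ →₀ ℕ} (he : e ∈ p.support) :
    (e.sum fun _ k => k) = n := by
  have := hp (mem_support_iff.mp he)
  rwa [Pi.one_def, ← Finsupp.degree_eq_weight_one] at this

/-- The pairing of a rigid field with `∂Φ` for
`P = z₁`, `Q = z₂^ℓ`, `R = z₂^{(ℓ-1)/2} z₃`. -/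
theorem sum_mul_PhiD (m : ℕ) (g : Fin 3 → ℂ) (z : Fin 3 → ℂ) :
    ∑ j, g j * PhiD (X 0) (X 1 ^ (2 * m + 1)) (X 1 ^ m * X 2) j z =
      g 0 * (starRingEnd ℂ) (z 1 ^ (2 * m + 1)) +
      ((2 * m + 1) * z 1 ^ (2 * m) * g 1) * (starRingEnd ℂ) (z 0) +
      (m * z 1 ^ (m - 1) * z 2 * g 1 + z 1 ^ m * g 2) * (starRingEnd ℂ) (z 1 ^ m * z 2) := by
  simp [Fin.sum_univ_three, PhiD, pderiv_X, Derivation.leibniz_pow]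
  ring

/-- The real-linear parametrization of the rigid fields
`i a z₂^ℓ ∂/∂z₁` and `-(b+ic) z₂^{(ℓ-1)/2} z₃ ∂/∂z₁ + (b-ic) z₂^{(ℓ+1)/2} ∂/∂z₃`. -/
def rigidField (m : ℕ) : (Fin 3 → ℝ) →ₗ[ℝ] (Fin 3 → MvPolynomial (Fin 3) ℂ) where
  toFun v := ![C (Complex.I * (v 0 : ℂ)) * X 1 ^ (2 * m + 1) +
      C (-((v 1 : ℂ) + (v 2 : ℂ) * Complex.I)) * (X 1 ^ m * X 2), 0,
    C ((v 1 : ℂ) - (v 2 : ℂ) * Complex.I) * X 1 ^ (m + 1)]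
  map_add' v w := by
    funext j
    fin_cases j <;> simp <;> ring
  map_smul' r v := by
    have hr : ∀ p : MvPolynomial (Fin 3) ℂ, r • p = C (r : ℂ) * p := fun p => by
      ext
      simp [coeff_C_mul]
    funext j
    fin_cases j <;> simp [hr] <;> ring

theorem eval_rigidField (m : ℕ) (v : Fin 3 → ℝ) (z : Fin 3 → ℂ) :
    (fun j => eval z (rigidField m v j)) =
      ![Complex.I * v 0 * z 1 ^ (2 * m + 1) - (v 1 + v 2 * Complex.I) * (z 1 ^ m * z 2), 0,
        (v 1 - v 2 * Complex.I) * z 1 ^ (m + 1)] := by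
  funext j
  fin_cases j <;> simp [rigidField]
  ring

theorem rigidField_injective (m : ℕ) : Function.Injective (rigidField m) := by
  rw [← LinearMap.ker_eq_bot, LinearMap.ker_eq_bot']
  intro v hv
  have h1 := eval_rigidField m v ![0, 1, 0]
  rw [hv] at h1
  have h0 := congrFun h1 0
  have h2 := congrFun h1 2
  simp [Complex.ext_iff] at h0 h2
  funext j
  fin_cases j <;> simp [h0, h2]

theorem re_sum_rigidField (m : ℕ) (v : Fin 3 → ℝ) (z : Fin 3 → ℂ) :
    (∑ j, (![Complex.I * v 0 * z 1 ^ (2 * m + 1) - (v 1 + v 2 * Complex.I) * (z 1 ^ m * z 2), 0,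
        (v 1 - v 2 * Complex.I) * z 1 ^ (m + 1)] : Fin 3 → ℂ) j *
      PhiD (X 0) (X 1 ^ (2 * m + 1)) (X 1 ^ m * X 2) j z).re = 0 := by
  rw [sum_mul_PhiD]
  rw [← add_self_eq_zero, ← Complex.ofReal_inj]
  push_cast
  rw [← two_mul, ← Complex.ofReal_ofNat, ← Complex.ofReal_mul, ← Complex.add_conj]
  simp
  ring

theorem rigidField_mem_gcSet {m : ℕ} (hm : 1 ≤ m) (v : Fin 3 → ℝ) :
    rigidField m v ∈ gcSet (X 0) (X 1 ^ (2 * m + 1)) (X 1 ^ m * X 2) (2 * m + 2) := by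
  refine ⟨fun j e he => ?_, fun z => ?_⟩
  · have h1 : ∀ (c : ℂ) (k : ℕ), (C c * X 1 ^ k : MvPolynomial (Fin 3) ℂ).IsHomogeneous k :=
      fun c k => by simpa using (isHomogeneous_C (Fin 3) c).mul (isHomogeneous_X_pow (R := ℂ) 1 k)
    have h2 : ∀ c : ℂ, (C c * (X 1 ^ m * X 2) : MvPolynomial (Fin 3) ℂ).IsHomogeneous (m + 1) :=
      fun c => by
        simpa using (isHomogeneous_C (Fin 3) c).mul
          ((isHomogeneous_X_pow (R := ℂ) 1 m).mul (isHomogeneous_X ℂ 2))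
    fin_cases j
    · rcases Finset.mem_union.mp (support_add he) with he | he
      · rw [(h1 _ _).sum_eq_of_mem_support he]
        omega
      · rw [(h2 _).sum_eq_of_mem_support he]
        omega
    · simp [rigidField] at he
    · rw [(h1 _ _).sum_eq_of_mem_support he]
      omega
  · have := re_sum_rigidField m v z
    rwa [← eval_rigidField] at this

/-- The polarized form of the tangency equation. -/
theorem polarized_tangency {σ : Type*} [Finite σ] {A B E P Q R : MvPolynomial σ ℂ}
    (h : ∀ z, (eval z A * (starRingEnd ℂ) (eval z Q) + eval z B * (starRingEnd ℂ) (eval z P) +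
      eval z E * (starRingEnd ℂ) (eval z R)).re = 0) (z w : σ → ℂ) :
    eval z A * (starRingEnd ℂ) (eval w Q) + eval z B * (starRingEnd ℂ) (eval w P) +
      eval z E * (starRingEnd ℂ) (eval w R) + eval z Q * (starRingEnd ℂ) (eval w A) +
      eval z P * (starRingEnd ℂ) (eval w B) + eval z R * (starRingEnd ℂ) (eval w E) = 0 := by
  have := polarization ![A, B, E, Q, P, R] ![Q, P, R, A, B, E] (fun z => ?_) z w
  · simpa [Fin.sum_univ_succ, add_assoc] using this
  · have hz := congrArg (fun r : ℝ => ((2 * r : ℝ) : ℂ)) (h z)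
    simp only [← Complex.add_conj] at hz
    simp [Fin.sum_univ_succ] at hz ⊢
    linear_combination hz

theorem exists_coeff_of_tangency {m : ℕ} (hm : m ≠ 0) {A B E : MvPolynomial (Fin 3) ℂ}
    (h : ∀ z : Fin 3 → ℂ, (eval z A * (starRingEnd ℂ) (z 1 ^ (2 * m + 1)) +
      eval z B * (starRingEnd ℂ) (z 0) + eval z E * (starRingEnd ℂ) (z 1 ^ m * z 2)).re = 0) :
    ∃ a₁ a₂ a₃ b₁ b₂ b₃ e₁ e₂ e₃ : ℂ,
      A = C a₁ * X 1 ^ (2 * m + 1) + C a₂ * X 0 + C a₃ * (X 1 ^ m * X 2) ∧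
      B = C b₁ * X 1 ^ (2 * m + 1) + C b₂ * X 0 + C b₃ * (X 1 ^ m * X 2) ∧
      E = C e₁ * X 1 ^ (2 * m + 1) + C e₂ * X 0 + C e₃ * (X 1 ^ m * X 2) ∧
      a₁ + (starRingEnd ℂ) a₁ = 0 ∧ a₂ + (starRingEnd ℂ) b₁ = 0 ∧
      a₃ + (starRingEnd ℂ) e₁ = 0 := by
  have hpol := polarized_tangency (A := A) (B := B) (E := E)
    (P := X 0) (Q := X 1 ^ (2 * m + 1)) (R := X 1 ^ m * X 2) fun z => by simpa using h z
  simp only [map_mul, map_pow, eval_X] at hpol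
  have hA := fun z => hpol z ![0, 1, 0]
  have hB := fun z => hpol z ![1, 0, 0]
  have hE := fun z => hpol z ![0, 1, 1]
  simp [hm] at hA hB hE
  have exists_of_eval : ∀ (F : MvPolynomial (Fin 3) ℂ) (c₁ c₂ c₃ : ℂ),
      (∀ z : Fin 3 → ℂ, eval z F = c₁ * z 1 ^ (2 * m + 1) + c₂ * z 0 + c₃ * (z 1 ^ m * z 2)) →
      ∃ c₁ c₂ c₃ : ℂ,
        F = C c₁ * X 1 ^ (2 * m + 1) + C c₂ * X 0 + C c₃ * (X 1 ^ m * X 2) :=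
    fun F c₁ c₂ c₃ hF => ⟨c₁, c₂, c₃, MvPolynomial.funext fun z => by simp [hF]⟩
  obtain ⟨a₁, a₂, a₃, hA₀⟩ := exists_of_eval A (-(starRingEnd ℂ) (eval ![0, 1, 0] A))
    (-(starRingEnd ℂ) (eval ![0, 1, 0] B)) (-(starRingEnd ℂ) (eval ![0, 1, 0] E)) fun z => by
    linear_combination hA z
  obtain ⟨b₁, b₂, b₃, hB₀⟩ := exists_of_eval B (-(starRingEnd ℂ) (eval ![1, 0, 0] A))
    (-(starRingEnd ℂ) (eval ![1, 0, 0] B)) (-(starRingEnd ℂ) (eval ![1, 0, 0] E)) fun z => by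
    linear_combination hB z
  obtain ⟨e₁, e₂, e₃, hE₀⟩ := exists_of_eval E
    ((starRingEnd ℂ) (eval ![0, 1, 0] A) - (starRingEnd ℂ) (eval ![0, 1, 1] A))
    ((starRingEnd ℂ) (eval ![0, 1, 0] B) - (starRingEnd ℂ) (eval ![0, 1, 1] B))
    ((starRingEnd ℂ) (eval ![0, 1, 0] E) - (starRingEnd ℂ) (eval ![0, 1, 1] E)) fun z => by
    linear_combination hE z - hA z
  subst hA₀ hB₀ hE₀
  have h₁ := hA ![0, 1, 0]
  have h₂ := hA ![1, 0, 0]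
  have h₃ := hA ![0, 1, 1]
  simp [hm] at h₁ h₂ h₃
  exact ⟨a₁, a₂, a₃, b₁, b₂, b₃, e₁, e₂, e₃, rfl, rfl, rfl, h₁, h₂,
    by linear_combination h₃ - h₁⟩

theorem exists_rigidField_eq {m : ℕ} (hm : 1 ≤ m) {f : Fin 3 → MvPolynomial (Fin 3) ℂ}
    (hf : f ∈ gcSet (X 0) (X 1 ^ (2 * m + 1)) (X 1 ^ m * X 2) (2 * m + 2)) :
    ∃ v, rigidField m v = f := by
  obtain ⟨hdeg, hre⟩ := hf
  have hlin : ∀ j k, coeff (Finsupp.single k 1) (f j) = 0 := fun j k => by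
    by_contra hne
    have := (hdeg j _ (mem_support_iff.mpr hne)).1
    simp at this
  have hm0 : m ≠ 0 := by omega
  have hX : (X 1 ^ m : MvPolynomial (Fin 3) ℂ) ≠ 0 := pow_ne_zero _ (X_ne_zero _)
  obtain ⟨a₁, a₂, a₃, b₁, b₂, b₃, e₁, e₂, e₃, hA, hB, hE, h₁, h₂, h₃⟩ :=
    exists_coeff_of_tangency hm0 (A := f 0) (B := C (2 * m + 1 : ℂ) * X 1 ^ (2 * m) * f 1)
      (E := C (m : ℂ) * X 1 ^ (m - 1) * X 2 * f 1 + X 1 ^ m * f 2) fun z => by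
      have := hre z
      rw [sum_mul_PhiD m (fun j => eval z (f j))] at this
      simpa using this
  have hpow : ∀ (i : Fin 3) (k : ℕ), i ≠ 1 →
      coeff (Finsupp.single i 1) (X 1 ^ (k + 1) : MvPolynomial (Fin 3) ℂ) = 0 := fun i k hi => by
    rw [coeff_X_pow, if_neg]
    rw [Finsupp.single_eq_single_iff]
    simp [hi.symm]
  have ha₂ : a₂ = 0 := by
    have := hlin 0 0
    rw [hA] at this
    simpa [coeff_C_mul, ← mul_assoc, coeff_mul_X', hpow] using this
  have hb₁ : b₁ = 0 := by simpa [ha₂] using h₂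
  have hb₂ : b₂ = 0 := by
    have := congrArg (eval ![1, 0, 0]) hB
    simpa [hm0] using this.symm
  have hb₃ : b₃ = 0 := by
    have hcancel : C (2 * m + 1 : ℂ) * X 1 ^ m * f 1 = C b₃ * X 2 := by
      refine mul_left_cancel₀ hX ?_
      rw [hb₁, hb₂] at hB
      simp only [C_0] at hB
      linear_combination hB
    have := congrArg (eval ![0, 0, 1]) hcancel
    simpa [hm0] using this.symm
  have hf₁ : f 1 = 0 := by
    have hC : (C (2 * m + 1 : ℂ) : MvPolynomial (Fin 3) ℂ) ≠ 0 := by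
      rw [Ne, C_eq_zero]
      exact_mod_cast Nat.succ_ne_zero (2 * m)
    rw [hb₁, hb₂, hb₃] at hB
    simp only [C_0, zero_mul, add_zero] at hB
    exact (mul_eq_zero.mp hB).resolve_left (mul_ne_zero hC (pow_ne_zero _ (X_ne_zero _)))
  rw [hf₁, mul_zero, zero_add] at hE
  have he₂ : e₂ = 0 := by
    have := congrArg (eval ![1, 0, 0]) hE
    simpa [hm0] using this.symm
  have hf₂ : f 2 = C e₁ * X 1 ^ (m + 1) + C e₃ * X 2 := by
    refine mul_left_cancel₀ hX ?_
    rw [he₂, C_0] at hE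
    linear_combination hE
  have he₃ : e₃ = 0 := by
    have := hlin 2 2
    rw [hf₂] at this
    simpa [coeff_C_mul, hpow] using this
  refine ⟨![a₁.im, e₁.re, -e₁.im], ?_⟩
  have ha₁' : Complex.I * (a₁.im : ℂ) = a₁ := by
    rw [Complex.ext_iff] at h₁ ⊢
    simp at h₁ ⊢
    linarith
  have ha₃' : -((e₁.re : ℂ) + -(e₁.im : ℂ) * Complex.I) = a₃ := by
    rw [Complex.ext_iff] at h₃ ⊢
    simp at h₃ ⊢
    constructor <;> linarith
  have he₁' : (e₁.re : ℂ) - -(e₁.im : ℂ) * Complex.I = e₁ := by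
    simp
  funext j
  fin_cases j
  · change C (Complex.I * (a₁.im : ℂ)) * X 1 ^ (2 * m + 1) +
      C (-((e₁.re : ℂ) + ((-e₁.im : ℝ) : ℂ) * Complex.I)) * (X 1 ^ m * X 2) = f 0
    rw [Complex.ofReal_neg, ha₁', ha₃', hA, ha₂]
    simp
  · exact hf₁.symm
  · change C ((e₁.re : ℂ) - ((-e₁.im : ℝ) : ℂ) * Complex.I) * X 1 ^ (m + 1) = f 2
    rw [Complex.ofReal_neg, he₁', hf₂, he₃]
    simp

/-- For `ℓ = 2m+1 ≥ 3` odd, `P = z₁`, `Q = z₂^ℓ`,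
`R = z₂^{(ℓ-1)/2} z₃` (so `d = ℓ + 1`): (1) `i a z₂^ℓ ∂/∂z₁` is an infinitesimal CR
automorphism for all real `a`; (2) `-(a+ib) z₂^{(ℓ-1)/2} z₃ ∂/∂z₁ + (a-ib) z₂^{(ℓ+1)/2} ∂/∂z₃`
is an infinitesimal CR automorphism for all real `a, b`; (3) `dim_ℝ g_c = 3`. -/
theorem stmt17 (m : ℕ) (hm : 1 ≤ m) :
    (∀ a : ℝ,
      IsInfCR (X 0) (X 1 ^ (2 * m + 1)) (X 1 ^ m * X 2)
        ![C (Complex.I * (a : ℂ)) * X 1 ^ (2 * m + 1), 0, 0] 0) ∧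
    (∀ a b : ℝ,
      IsInfCR (X 0) (X 1 ^ (2 * m + 1)) (X 1 ^ m * X 2)
        ![C (-(((a : ℂ)) + (b : ℂ) * Complex.I)) * X 1 ^ m * X 2, 0,
          C ((a : ℂ) - (b : ℂ) * Complex.I) * X 1 ^ (m + 1)] 0) ∧
    Module.rank ℝ ↥(Submodule.span ℝ
      (gcSet (X 0) (X 1 ^ (2 * m + 1)) (X 1 ^ m * X 2) (2 * m + 2))) = 3 := by
  refine ⟨fun a z u => ?_, fun a b z u => ?_, ?_⟩
  · have := re_sum_rigidField m ![a, 0, 0] z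
    have hz : ∀ x : ℂ, (Fin.snoc z x : Fin 4 → ℂ) 1 = z 1 := fun _ => rfl
    rw [Fin.sum_univ_three] at this ⊢
    simp [hz] at this ⊢
    linarith
  · have := re_sum_rigidField m ![0, a, b] z
    have hz : ∀ x : ℂ, (Fin.snoc z x : Fin 4 → ℂ) 1 = z 1 ∧ (Fin.snoc z x : Fin 4 → ℂ) 2 = z 2 :=
      fun _ => ⟨rfl, rfl⟩
    rw [Fin.sum_univ_three] at this ⊢
    simp [hz] at this ⊢
    linarith
  · have hspan : Submodule.span ℝ
        (gcSet (X 0) (X 1 ^ (2 * m + 1)) (X 1 ^ m * X 2) (2 * m + 2)) =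
        LinearMap.range (rigidField m) := by
      refine le_antisymm (Submodule.span_le.mpr fun f hf => exists_rigidField_eq hm hf) ?_
      rintro _ ⟨v, rfl⟩
      exact Submodule.subset_span (rigidField_mem_gcSet hm v)
    rw [hspan, rank_range_of_injective _ (rigidField_injective m)]
    simp
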